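/- Let m = 1, X = [−1/2, 1/2], f ≡ 0, and ℓ_SPO+(d,c) := (1/2)(|2d−c| − 2d·sign(c) + |c|). Fix α > 0 and let μ be a Borel probability measure on ℝ with a continuous everywhere-positive density, symmetric about its mean, with ∫|c|dμ < ∞ and |μ((0,∞)) − μ((−∞,0))| ≥ α. Then for every d ∈ ℝ, ∫L(d,c)dμ(c) − inf_{d'∈ℝ} ∫L(d',c)dμ(c) ≤ (1/α)·( ∫ℓ_SPO+(d,c)dμ(c) − inf_{d'∈ℝ} ∫ℓ_SPO+(d',c)dμ(c) ). -/

import Mathlib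

open MeasureTheory

/-!
Let `m` be the mean of `μ` and `p = μ (0, ∞) - μ (-∞, 0) = ∫ sign c`. Symmetry about `m` forces
`0 ≤ m * p`, so `m * p = |m| * |p| ≥ α * |m|`. If `d * p > 0`, then `d` and `m` do not have opposite
signs, the decision taken at `d` is also optimal for the mean cost `m`, and the excess true risk
vanishes. If `d * p ≤ 0`, the excess true risk is at most `|m|`, the length of `X` being `1`.
On the surrogate side, the subgradient inequality `|2d - c| ≥ |c| - 2d * sign c` bounds the risk at
`d` below by `∫ |c| - 2dp`, whereas the reflection `c ↦ 2m - c` shows that the risk at `m` equals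
`∫ |c| - mp`; the excess SPO+ risk is therefore at least `m * p - 2 * (d * p) ≥ α * |m|`.
-/

section LinearRegret

/-- Excess cost `c * x - inf_{y ∈ X} c * y` of the decision `x` under the cost `c`. The true loss
`L(d, c)` is the regret of the decision selected at the prediction `d`. -/
noncomputable def linearRegret (X : Set ℝ) (x c : ℝ) : ℝ :=
  c * x - sInf ((fun y => c * y) '' X)

lemma sInf_image_const_mul_Icc {a b : ℝ} (hab : a ≤ b) (c : ℝ) :
    sInf ((fun y => c * y) '' Set.Icc a b) = min (c * a) (c * b) := by
  rw [← Set.uIcc_of_le hab, Set.image_const_mul_uIcc, Set.uIcc, csInf_Icc inf_le_sup]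

lemma linearRegret_Icc {a b : ℝ} (hab : a ≤ b) (x c : ℝ) :
    linearRegret (Set.Icc a b) x c = c * x - min (c * a) (c * b) := by
  rw [linearRegret, sInf_image_const_mul_Icc hab]

lemma isMinOn_const_mul_of_mul_nonneg {X : Set ℝ} {d m x : ℝ} (hd : d ≠ 0) (hdm : 0 ≤ d * m)
    (hx : IsMinOn (fun y => d * y) X x) : IsMinOn (fun y => m * y) X x := by
  refine isMinOn_iff.2 fun y hy => ?_
  have hgap : 0 ≤ d * (y - x) := by linarith [isMinOn_iff.1 hx y hy]
  have hscaled : 0 ≤ d ^ 2 * (m * (y - x)) := by linarith [mul_nonneg hdm hgap]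
  linarith [nonneg_of_mul_nonneg_right hscaled (by positivity)]

variable {μ : Measure ℝ} {a b : ℝ}

lemma integrable_linearRegret_Icc (hab : a ≤ b) (hμ : Integrable (fun c : ℝ => c) μ) (x : ℝ) :
    Integrable (linearRegret (Set.Icc a b) x) μ := by
  rw [funext (linearRegret_Icc hab x)]
  exact (hμ.mul_const x).sub ((hμ.mul_const a).inf (hμ.mul_const b))

lemma integral_linearRegret_Icc_sub (hab : a ≤ b) (hμ : Integrable (fun c : ℝ => c) μ)
    (x y : ℝ) :
    ∫ c, linearRegret (Set.Icc a b) x c ∂μ - ∫ c, linearRegret (Set.Icc a b) y c ∂μ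
      = (∫ c, c ∂μ) * (x - y) := by
  rw [← integral_sub (integrable_linearRegret_Icc hab hμ x) (integrable_linearRegret_Icc hab hμ y),
    ← integral_mul_const]
  congr with c
  unfold linearRegret
  ring

lemma integral_linearRegret_Icc_sub_iInf_le {ι : Type*} (hab : a ≤ b)
    (hμ : Integrable (fun c : ℝ => c) μ) {x : ι → ℝ} {i : ι} {K : ℝ}
    (hK : ∀ j, (∫ c, c ∂μ) * (x i - x j) ≤ K) :
    ∫ c, linearRegret (Set.Icc a b) (x i) c ∂μ
      - ⨅ j, ∫ c, linearRegret (Set.Icc a b) (x j) c ∂μ ≤ K := by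
  have : Nonempty ι := ⟨i⟩
  rw [sub_le_comm]
  refine le_ciInf fun j => ?_
  linarith [hK j, integral_linearRegret_Icc_sub hab hμ (x i) (x j)]

lemma integral_linearRegret_Icc_sub_iInf_nonpos {ι : Type*} (hab : a ≤ b)
    (hμ : Integrable (fun c : ℝ => c) μ) {x : ι → ℝ} (hx : ∀ j, x j ∈ Set.Icc a b) {i : ι}
    (hmin : IsMinOn (fun y => (∫ c, c ∂μ) * y) (Set.Icc a b) (x i)) :
    ∫ c, linearRegret (Set.Icc a b) (x i) c ∂μ
      - ⨅ j, ∫ c, linearRegret (Set.Icc a b) (x j) c ∂μ ≤ 0 :=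
  integral_linearRegret_Icc_sub_iInf_le hab hμ fun j => by
    linarith [isMinOn_iff.1 hmin (x j) (hx j)]

lemma integral_linearRegret_Icc_sub_iInf_le_abs_mul {ι : Type*}
    (hμ : Integrable (fun c : ℝ => c) μ) {x : ι → ℝ} (hx : ∀ j, x j ∈ Set.Icc a b) (i : ι) :
    ∫ c, linearRegret (Set.Icc a b) (x i) c ∂μ
      - ⨅ j, ∫ c, linearRegret (Set.Icc a b) (x j) c ∂μ ≤ |∫ c, c ∂μ| * (b - a) :=
  integral_linearRegret_Icc_sub_iInf_le ((hx i).1.trans (hx i).2) hμ fun j => calc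
    (∫ c, c ∂μ) * (x i - x j) ≤ |∫ c, c ∂μ| * |x i - x j| := (le_abs_self _).trans_eq (abs_mul _ _)
    _ ≤ |∫ c, c ∂μ| * (b - a) := by
      gcongr
      exact Real.dist_le_of_mem_Icc (hx i) (hx j)

end LinearRegret

section Sign

lemma sign_eq_indicator_sub_indicator (c : ℝ) :
    Real.sign c = (Set.Ioi (0 : ℝ)).indicator 1 c - (Set.Iio (0 : ℝ)).indicator 1 c := by
  rcases lt_trichotomy c 0 with h | rfl | h
  · simp [Real.sign_of_neg h, h, h.le]
  · simp
  · simp [Real.sign_of_pos h, h, h.le]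

lemma sign_mul_self_eq_abs (c : ℝ) : Real.sign c * c = |c| := by
  rcases lt_trichotomy c 0 with h | rfl | h
  · rw [Real.sign_of_neg h, abs_of_neg h, neg_one_mul]
  · simp
  · rw [Real.sign_of_pos h, abs_of_pos h, one_mul]

lemma abs_sign_mul_le_abs (c x : ℝ) : |Real.sign c * x| ≤ |x| := by
  rcases Real.sign_apply_eq c with h | h | h <;> simp [h]

variable {μ : Measure ℝ} [IsFiniteMeasure μ]

lemma integrable_indicator_one {s : Set ℝ} (hs : MeasurableSet s) :
    Integrable (s.indicator (1 : ℝ → ℝ)) μ :=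
  (integrable_const (1 : ℝ)).indicator hs

lemma integrable_sign : Integrable Real.sign μ := by
  rw [funext sign_eq_indicator_sub_indicator]
  exact (integrable_indicator_one measurableSet_Ioi).sub
    (integrable_indicator_one measurableSet_Iio)

lemma integral_sign : ∫ c, Real.sign c ∂μ = μ.real (Set.Ioi 0) - μ.real (Set.Iio 0) := by
  simp_rw [sign_eq_indicator_sub_indicator]
  rw [integral_sub (integrable_indicator_one measurableSet_Ioi)
    (integrable_indicator_one measurableSet_Iio), integral_indicator_one measurableSet_Ioi,
    integral_indicator_one measurableSet_Iio]

end Sign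

section Reflection

variable {μ : Measure ℝ} {a : ℝ}

lemma measurePreserving_two_mul_sub_of_map_sub_eq
    (h : μ.map (fun c => c - a) = μ.map (fun c => a - c)) :
    MeasurePreserving (fun c => 2 * a - c) μ μ where
  measurable := by fun_prop
  map_eq := calc
    μ.map (fun c => 2 * a - c) = (μ.map fun c => a - c).map (fun y => y + a) := by
      rw [Measure.map_map (by fun_prop) (by fun_prop)]
      congr with c
      simp only [Function.comp_apply]
      ring
    _ = (μ.map fun c => c - a).map (fun y => y + a) := by rw [h]
    _ = μ := by
      rw [Measure.map_map (by fun_prop) (by fun_prop)]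
      simp [Function.comp_def]

lemma mul_integral_sign_nonneg [IsFiniteMeasure μ]
    (h : MeasurePreserving (fun c => 2 * a - c) μ μ) : 0 ≤ a * ∫ c, Real.sign c ∂μ := by
  have hIio : μ.real (Set.Iio 0) = μ.real (Set.Ioi (2 * a)) := by
    rw [← h.measureReal_preimage measurableSet_Iio.nullMeasurableSet]
    simp
  rw [integral_sign, hIio]
  rcases le_total 0 a with ha | ha
  · exact mul_nonneg ha (sub_nonneg.2 (measureReal_mono (Set.Ioi_subset_Ioi (by linarith))))
  · exact mul_nonneg_of_nonpos_of_nonpos ha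
      (sub_nonpos.2 (measureReal_mono (Set.Ioi_subset_Ioi (by linarith))))

end Reflection

section SPOPlus

/-- The SPO+ surrogate loss of the prediction `d` at the cost `c`, for the feasible set
`[-1/2, 1/2]`. -/
noncomputable def spoPlusLoss (d c : ℝ) : ℝ :=
  (1/2) * (|2 * d - c| - 2 * d * Real.sign c + |c|)

lemma spoPlusLoss_nonneg (d c : ℝ) : 0 ≤ spoPlusLoss d c := by
  have h : Real.sign c * (2 * d - c) ≤ |2 * d - c| :=
    (le_abs_self _).trans (abs_sign_mul_le_abs c _)
  unfold spoPlusLoss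
  linarith [sign_mul_self_eq_abs c]

lemma abs_sub_two_mul_sign_le_spoPlusLoss (d c : ℝ) :
    |c| - 2 * d * Real.sign c ≤ spoPlusLoss d c := by
  have h : -(Real.sign c * (2 * d - c)) ≤ |2 * d - c| :=
    (neg_le_abs _).trans (abs_sign_mul_le_abs c _)
  unfold spoPlusLoss
  linarith [sign_mul_self_eq_abs c]

variable {μ : Measure ℝ}

lemma bddBelow_range_integral_spoPlusLoss :
    BddBelow (Set.range fun d => ∫ c, spoPlusLoss d c ∂μ) :=
  ⟨0, Set.forall_mem_range.2 fun d => integral_nonneg (spoPlusLoss_nonneg d)⟩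

variable [IsFiniteMeasure μ]

lemma integrable_spoPlusLoss (hμ : Integrable (fun c : ℝ => c) μ) (d : ℝ) :
    Integrable (spoPlusLoss d) μ :=
  (((((integrable_const (2 * d)).sub hμ).abs).sub (integrable_sign.const_mul (2 * d))).add
    hμ.abs).const_mul (1/2)

lemma integral_abs_sub_le_integral_spoPlusLoss (hμ : Integrable (fun c : ℝ => c) μ) (d : ℝ) :
    ∫ c, |c| ∂μ - 2 * d * ∫ c, Real.sign c ∂μ ≤ ∫ c, spoPlusLoss d c ∂μ := by
  have hsign : Integrable (fun c => 2 * d * Real.sign c) μ := integrable_sign.const_mul _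
  rw [← integral_const_mul, ← integral_sub hμ.abs hsign]
  exact integral_mono (hμ.abs.sub hsign) (integrable_spoPlusLoss hμ d)
    (abs_sub_two_mul_sign_le_spoPlusLoss d)

lemma integral_spoPlusLoss_of_measurePreserving {a : ℝ} (hμ : Integrable (fun c : ℝ => c) μ)
    (h : MeasurePreserving (fun c => 2 * a - c) μ μ) :
    ∫ c, spoPlusLoss a c ∂μ = ∫ c, |c| ∂μ - a * ∫ c, Real.sign c ∂μ := by
  have hreflect : ∫ c, |2 * a - c| ∂μ = ∫ c, |c| ∂μ :=
    h.integral_comp (measurableEmbedding_subLeft (2 * a)) (fun c => |c|)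
  have habs : Integrable (fun c => |2 * a - c|) μ := ((integrable_const (2 * a)).sub hμ).abs
  have hsign : Integrable (fun c => 2 * a * Real.sign c) μ := integrable_sign.const_mul _
  simp only [spoPlusLoss]
  have hdiff : Integrable (fun c => |2 * a - c| - 2 * a * Real.sign c) μ := habs.sub hsign
  rw [integral_const_mul, integral_add hdiff hμ.abs, integral_sub habs hsign,
    integral_const_mul, hreflect]
  ring

lemma mul_integral_sign_sub_le_integral_spoPlusLoss_sub_iInf {a : ℝ}
    (hμ : Integrable (fun c : ℝ => c) μ) (h : MeasurePreserving (fun c => 2 * a - c) μ μ) (d : ℝ) :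
    a * ∫ c, Real.sign c ∂μ - 2 * (d * ∫ c, Real.sign c ∂μ)
      ≤ ∫ c, spoPlusLoss d c ∂μ - ⨅ d', ∫ c, spoPlusLoss d' c ∂μ := by
  have hinf := ciInf_le (bddBelow_range_integral_spoPlusLoss (μ := μ)) a
  linarith [integral_abs_sub_le_integral_spoPlusLoss hμ d,
    integral_spoPlusLoss_of_measurePreserving hμ h]

end SPOPlus

theorem statement13_general (α : ℝ) (hα : 0 < α) (xs : ℝ → ℝ)
    (hxsmem : ∀ d : ℝ, xs d ∈ Set.Icc (-(1:ℝ)/2) (1/2))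
    (hxsmin : ∀ d : ℝ, IsMinOn (fun x => d * x) (Set.Icc (-(1:ℝ)/2) (1/2)) (xs d))
    (μ : Measure ℝ) [IsFiniteMeasure μ]
    (hint : Integrable (fun c : ℝ => |c|) μ)
    (hsymm : μ.map (fun c => c - ∫ x, x ∂μ) = μ.map (fun c => (∫ x, x ∂μ) - c))
    (hmargin : α ≤ |μ.real (Set.Ioi 0) - μ.real (Set.Iio 0)|) (d : ℝ) :
    ∫ c, linearRegret (Set.Icc (-(1:ℝ)/2) (1/2)) (xs d) c ∂μ
        - ⨅ d' : ℝ, ∫ c, linearRegret (Set.Icc (-(1:ℝ)/2) (1/2)) (xs d') c ∂μ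
      ≤ (1 / α) * (∫ c, spoPlusLoss d c ∂μ - ⨅ d' : ℝ, ∫ c, spoPlusLoss d' c ∂μ) := by
  have hμ : Integrable (fun c : ℝ => c) μ :=
    (integrable_norm_iff measurable_id.aestronglyMeasurable).1 hint
  have hreflect := measurePreserving_two_mul_sub_of_map_sub_eq hsymm
  have hsurrogate := mul_integral_sign_sub_le_integral_spoPlusLoss_sub_iInf hμ hreflect d
  have hmp := mul_integral_sign_nonneg hreflect
  rw [← integral_sign] at hmargin
  set m := ∫ c, c ∂μ
  set p := ∫ c, Real.sign c ∂μ
  rcases lt_or_ge 0 (d * p) with hdp | hdp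
  · have hdm : 0 ≤ d * m := by
      have hscaled : 0 ≤ d * m * p ^ 2 := by linarith [mul_nonneg hdp.le hmp]
      exact nonneg_of_mul_nonneg_left hscaled (sq_pos_of_ne_zero (right_ne_zero_of_mul hdp.ne'))
    have hopt := isMinOn_const_mul_of_mul_nonneg (left_ne_zero_of_mul hdp.ne') hdm (hxsmin d)
    have hnonneg := sub_nonneg.2 (ciInf_le (bddBelow_range_integral_spoPlusLoss (μ := μ)) d)
    exact (integral_linearRegret_Icc_sub_iInf_nonpos (by norm_num) hμ hxsmem hopt).trans
      (mul_nonneg (by positivity) hnonneg)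
  · have hαm : α * |m| ≤ m * p := by
      rw [← abs_of_nonneg hmp, abs_mul, mul_comm]
      gcongr
    have htrue := integral_linearRegret_Icc_sub_iInf_le_abs_mul hμ hxsmem d
    rw [show (1/2 - -(1:ℝ)/2) = 1 by norm_num, mul_one] at htrue
    refine htrue.trans ?_
    rw [one_div, ← div_eq_inv_mul, le_div_iff₀' hα]
    linarith

/-- in the one-dimensional case `X = [−1/2, 1/2]`, `f ≡ 0`, the SPO+ loss
`ℓ_SPO+(d,c) = (1/2)(|2d−c| − 2d·sign(c) + |c|)` is calibrated with constant `1/α` on the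
class of continuous symmetric distributions with margin at least `α`:
excess true risk ≤ (1/α) · excess SPO+ risk. -/
theorem statement13 (α : ℝ) (hα : 0 < α)
    (xs : ℝ → ℝ)
    (hxsmem : ∀ d : ℝ, xs d ∈ Set.Icc (-(1:ℝ)/2) (1/2))
    (hxsmin : ∀ d : ℝ, ∀ x ∈ Set.Icc (-(1:ℝ)/2) (1/2), d * xs d ≤ d * x)
    (μ : Measure ℝ) [IsProbabilityMeasure μ]
    (hdens : ∃ ρ : ℝ → ℝ, Continuous ρ ∧ (∀ x, 0 < ρ x) ∧
        μ = volume.withDensity fun x => ENNReal.ofReal (ρ x))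
    (hint : Integrable (fun c : ℝ => |c|) μ)
    (hsymm : μ.map (fun c => c - ∫ x, x ∂μ) = μ.map (fun c => (∫ x, x ∂μ) - c))
    (hmargin : α ≤ |(μ (Set.Ioi 0)).toReal - (μ (Set.Iio 0)).toReal|) :
    ∀ d : ℝ,
      (∫ c, (c * xs d - sInf ((fun x => c * x) '' Set.Icc (-(1:ℝ)/2) (1/2))) ∂μ)
          - (⨅ d' : ℝ, ∫ c, (c * xs d' - sInf ((fun x => c * x) '' Set.Icc (-(1:ℝ)/2) (1/2))) ∂μ)
        ≤ (1 / α) *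
          ((∫ c, (1/2) * (|2 * d - c| - 2 * d * Real.sign c + |c|) ∂μ)
            - (⨅ d' : ℝ, ∫ c, (1/2) * (|2 * d' - c| - 2 * d' * Real.sign c + |c|) ∂μ)) := by
  exact statement13_general α hα xs hxsmem (fun d => isMinOn_iff.2 (hxsmin d)) μ hint hsymm hmargin
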